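/- arXiv:1205.0947 — 2 statements merged into one kernel-verified Lean document; each statement's English description precedes it below -/
import Mathlib

section
/- The map ν ↦ F_ν is injective: if ν₁ and ν₂ are probability measures on [0,∞] such that F_{ν₁}(x,y) = F_{ν₂}(x,y) for all x, y ∈ ℝ, then ν₁ = ν₂. -/
open MeasureTheory Filter Topology
open scoped ENNReal

/-- Standard normal density. -/
noncomputable def stdPdf (t : ℝ) : ℝ := (Real.sqrt (2 * Real.pi))⁻¹ * Real.exp (-(t ^ 2) / 2)

/-- Standard normal CDF. -/
noncomputable def stdCdf (x : ℝ) : ℝ := ∫ t in Set.Iic x, stdPdf t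

/-- The integrand `Φ(λ + (y−x)/(2λ)) e^{−x} + Φ(λ + (x−y)/(2λ)) e^{−y}` extended continuously
to `λ = 0` and `λ = ∞` (we identify `[0,∞]` with `ℝ≥0∞`). -/
noncomputable def nuKer (x y : ℝ) (l : ℝ≥0∞) : ℝ :=
  if l = 0 then Real.exp (-min x y)
  else if l = ⊤ then Real.exp (-x) + Real.exp (-y)
  else
    stdCdf (l.toReal + (y - x) / (2 * l.toReal)) * Real.exp (-x)
      + stdCdf (l.toReal + (x - y) / (2 * l.toReal)) * Real.exp (-y)

/-- The mixed bivariate Hüsler–Reiss distribution function `F_ν` associated with a (probability)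
measure `ν` on `[0,∞]`. -/
noncomputable def Fnu (ν : Measure ℝ≥0∞) (x y : ℝ) : ℝ :=
  Real.exp (-∫ l, nuKer x y l ∂ν)

/-- Weak convergence of measures: convergence of integrals of bounded continuous functions. -/
def WeakTendsto {α : Type*} [TopologicalSpace α] [MeasurableSpace α]
    (μ : ℕ → Measure α) (ν : Measure α) : Prop :=
  ∀ f : BoundedContinuousFunction α ℝ,
    Tendsto (fun n => ∫ a, f a ∂(μ n)) atTop (𝓝 (∫ a, f a ∂ν))

open ProbabilityTheory Set
open scoped NNReal BoundedContinuousFunction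

/-! Write the exponent as `F_ν(x, y) = exp (-∫ nuKer x y dν)`. If `w = 2 λ t - 2 λ ^ 2` with `t`
standard normal, then for finite `λ` the kernel is `e⁻ˣ + e⁻ʸ - E[min (e⁻ˣ) (e^(w - y))]`. Hence
`F_ν(0, ·)` determines `z ↦ ∫ min 1 (e^(w - z))`, where `w` is averaged over the part of `ν` on
`[0, ∞)`. Integrating this function against `e^(s z)`, with `0 < Re s < 1`, gives
`E[e^(s w)] / (s (1 - s))`, and `E[e^(s w) | λ] = e^(-2 s (1 - s) λ ^ 2)`. On the line
`Re s = 1 / 2` the number `2 s (1 - s)` takes every real value `≥ 1 / 2`, in particular every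
positive integer, so the moments of the bounded injective function `λ ↦ e^(-λ ^ 2)` under `ν` are
known, and these determine `ν`. -/

section Moments

variable {E : Type*} [MeasurableSpace E] {P Q : Measure E} [IsFiniteMeasure P] [IsFiniteMeasure Q]

lemma integral_eq_of_mem_adjoin_singleton [TopologicalSpace E] [OpensMeasurableSpace E]
    {f g : E →ᵇ ℝ} (h : ∀ k : ℕ, ∫ x, f x ^ k ∂P = ∫ x, f x ^ k ∂Q)
    (hg : g ∈ Algebra.adjoin ℝ {f}) : ∫ x, g x ∂P = ∫ x, g x ∂Q := by
  rw [← Subalgebra.mem_toSubmodule, Algebra.adjoin_eq_span] at hg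
  induction hg using Submodule.span_induction with
  | mem g hg =>
    obtain ⟨k, rfl⟩ := Submonoid.mem_closure_singleton.1 hg
    simpa using h k
  | zero => simp
  | add g₁ g₂ _ _ h₁ h₂ =>
    simp only [BoundedContinuousFunction.coe_add, Pi.add_apply]
    rw [integral_add (g₁.integrable P) (g₂.integrable P),
      integral_add (g₁.integrable Q) (g₂.integrable Q), h₁, h₂]
  | smul c g _ hg =>
    simp only [BoundedContinuousFunction.coe_smul, integral_smul, hg]

lemma ext_of_forall_integral_pow_eq_of_continuous [TopologicalSpace E] [PolishSpace E]
    [BorelSpace E] {f : E →ᵇ ℝ} (hf : Function.Injective f)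
    (h : ∀ k : ℕ, ∫ x, f x ^ k ∂P = ∫ x, f x ^ k ∂Q) : P = Q := by
  refine ext_of_forall_mem_subalgebra_integral_eq_of_polish (𝕜 := ℝ)
    (A := StarAlgebra.adjoin ℝ {f}) (fun x y hxy ↦ ?_) fun g hg ↦ ?_
  · exact ⟨f, ⟨f.toContinuousMap, ⟨f, StarAlgebra.self_mem_adjoin_singleton ℝ f, rfl⟩, rfl⟩,
      hf.ne hxy⟩
  · refine integral_eq_of_mem_adjoin_singleton h ?_
    rwa [← StarSubalgebra.mem_toSubalgebra, StarAlgebra.adjoin_toSubalgebra, star_singleton,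
      show star f = f from rfl, union_self] at hg

lemma ext_of_forall_integral_pow_eq [StandardBorelSpace E] {f : E → ℝ} (hf : Measurable f)
    (hinj : Function.Injective f) {C : ℝ} (hC : ∀ x, ‖f x‖ ≤ C)
    (h : ∀ k : ℕ, ∫ x, f x ^ k ∂P = ∫ x, f x ^ k ∂Q) : P = Q := by
  have hmem (x : E) : f x ∈ Icc (-C) C := abs_le.1 (hC x)
  have hemb : MeasurableEmbedding fun x ↦ (⟨f x, hmem x⟩ : Icc (-C) C) :=
    (hf.subtype_mk (h := hmem)).measurableEmbedding fun x y hxy ↦ hinj (congrArg Subtype.val hxy)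
  refine hemb.map_injective (ext_of_forall_integral_pow_eq_of_continuous
    (f := BoundedContinuousFunction.mkOfCompact ⟨Subtype.val, continuous_subtype_val⟩)
    Subtype.val_injective fun k ↦ ?_)
  simpa only [hemb.integral_map] using! h k

end Moments

section Transform

variable {s : ℂ}

lemma cexp_mul_min_one_exp_eqOn_Iic (s : ℂ) :
    EqOn (fun z : ℝ ↦ Complex.exp (s * z) * (min 1 (Real.exp (-z)) : ℝ))
      (fun z : ℝ ↦ Complex.exp (s * z)) (Iic 0) := by
  intro z hz
  simp [min_eq_left (Real.one_le_exp (neg_nonneg.2 hz))]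

lemma cexp_mul_min_one_exp_eqOn_Ioi (s : ℂ) :
    EqOn (fun z : ℝ ↦ Complex.exp (s * z) * (min 1 (Real.exp (-z)) : ℝ))
      (fun z : ℝ ↦ Complex.exp ((s - 1) * z)) (Ioi 0) := by
  intro z hz
  have hle : Real.exp (-z) ≤ 1 := Real.exp_le_one_iff.2 (neg_nonpos.2 (mem_Ioi.1 hz).le)
  simp only [min_eq_right hle, Complex.ofReal_exp, ← Complex.exp_add]
  congr 1
  push_cast
  ring

lemma integrableOn_cexp_mul_min_one_exp_Iic (h0 : 0 < s.re) :
    IntegrableOn (fun z : ℝ ↦ Complex.exp (s * z) * (min 1 (Real.exp (-z)) : ℝ)) (Iic 0) :=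
  (integrableOn_congr_fun (cexp_mul_min_one_exp_eqOn_Iic s) measurableSet_Iic).2
    (integrableOn_exp_mul_complex_Iic h0 0)

lemma integrableOn_cexp_mul_min_one_exp_Ioi (h1 : s.re < 1) :
    IntegrableOn (fun z : ℝ ↦ Complex.exp (s * z) * (min 1 (Real.exp (-z)) : ℝ)) (Ioi 0) :=
  (integrableOn_congr_fun (cexp_mul_min_one_exp_eqOn_Ioi s) measurableSet_Ioi).2
    (integrableOn_exp_mul_complex_Ioi (by simpa using h1) 0)

lemma integrable_cexp_mul_min_one_exp (h0 : 0 < s.re) (h1 : s.re < 1) :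
    Integrable fun z : ℝ ↦ Complex.exp (s * z) * (min 1 (Real.exp (-z)) : ℝ) := by
  rw [← integrableOn_univ, ← Iic_union_Ioi (a := (0 : ℝ))]
  exact (integrableOn_cexp_mul_min_one_exp_Iic h0).union
    (integrableOn_cexp_mul_min_one_exp_Ioi h1)

lemma integral_cexp_mul_min_one_exp (h0 : 0 < s.re) (h1 : s.re < 1) :
    ∫ z : ℝ, Complex.exp (s * z) * (min 1 (Real.exp (-z)) : ℝ) = (s * (1 - s))⁻¹ := by
  have hs : s ≠ 0 := by rintro rfl; simp at h0
  have hs' : s - 1 ≠ 0 := sub_ne_zero.2 (by rintro rfl; simp at h1)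
  have hs'' : 1 - s ≠ 0 := by simpa using neg_ne_zero.2 hs'
  rw [← intervalIntegral.integral_Iic_add_Ioi (integrableOn_cexp_mul_min_one_exp_Iic h0)
      (integrableOn_cexp_mul_min_one_exp_Ioi h1),
    setIntegral_congr_fun measurableSet_Iic (cexp_mul_min_one_exp_eqOn_Iic s),
    setIntegral_congr_fun measurableSet_Ioi (cexp_mul_min_one_exp_eqOn_Ioi s),
    integral_exp_mul_complex_Iic h0, integral_exp_mul_complex_Ioi (by simpa using h1)]
  simp only [Complex.ofReal_zero, mul_zero, Complex.exp_zero]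
  field_simp
  ring

lemma cexp_mul_min_one_exp_sub (s : ℂ) (w z : ℝ) :
    Complex.exp (s * z) * (min 1 (Real.exp (w - z)) : ℝ) =
      Complex.exp (s * w) *
        (Complex.exp (s * (z - w : ℝ)) * (min 1 (Real.exp (-(z - w))) : ℝ)) := by
  rw [← mul_assoc, ← Complex.exp_add, neg_sub]
  congr 2
  push_cast
  ring

lemma integrable_cexp_mul_min_one_exp_sub (h0 : 0 < s.re) (h1 : s.re < 1) (w : ℝ) :
    Integrable fun z : ℝ ↦ Complex.exp (s * z) * (min 1 (Real.exp (w - z)) : ℝ) := by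
  simp only [cexp_mul_min_one_exp_sub s w]
  exact ((integrable_cexp_mul_min_one_exp h0 h1).comp_sub_right w).const_mul _

lemma integral_cexp_mul_min_one_exp_sub (h0 : 0 < s.re) (h1 : s.re < 1) (w : ℝ) :
    ∫ z : ℝ, Complex.exp (s * z) * (min 1 (Real.exp (w - z)) : ℝ) =
      Complex.exp (s * w) * (s * (1 - s))⁻¹ := by
  simp only [cexp_mul_min_one_exp_sub s w]
  rw [integral_const_mul, integral_sub_right_eq_self
    (fun z : ℝ ↦ Complex.exp (s * z) * (min 1 (Real.exp (-z)) : ℝ)) w,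
    integral_cexp_mul_min_one_exp h0 h1]

lemma integral_norm_cexp_mul_min_one_exp_sub (s : ℂ) (w : ℝ) :
    ∫ z : ℝ, ‖Complex.exp (s * z) * (min 1 (Real.exp (w - z)) : ℝ)‖ =
      Real.exp (s.re * w) *
        ∫ z : ℝ, ‖Complex.exp (s * z) * (min 1 (Real.exp (-z)) : ℝ)‖ := by
  simp only [cexp_mul_min_one_exp_sub s w]
  simp only [norm_mul (Complex.exp (s * w))]
  rw [integral_const_mul, integral_sub_right_eq_self
    (fun z : ℝ ↦ ‖Complex.exp (s * z) * (min 1 (Real.exp (-z)) : ℝ)‖) w, Complex.norm_exp,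
    Complex.re_mul_ofReal]

variable {Ω : Type*} [MeasurableSpace Ω] {ρ : Measure Ω} {X : Ω → ℝ}

lemma integrable_prod_cexp_mul_min_one_exp_sub [SFinite ρ] (hX : Measurable X) (h0 : 0 < s.re)
    (h1 : s.re < 1) (hs : s.re ∈ integrableExpSet X ρ) :
    Integrable (fun p : Ω × ℝ ↦
      Complex.exp (s * p.2) * (min 1 (Real.exp (X p.1 - p.2)) : ℝ)) (ρ.prod volume) := by
  rw [integrable_prod_iff (by fun_prop)]
  refine ⟨ae_of_all _ fun ω ↦ integrable_cexp_mul_min_one_exp_sub h0 h1 (X ω), ?_⟩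
  simp only [integral_norm_cexp_mul_min_one_exp_sub]
  exact hs.mul_const _

lemma complexMGF_eq_integral_cexp_mul_integral_min_one_exp_sub [SFinite ρ] (hX : Measurable X)
    (h0 : 0 < s.re) (h1 : s.re < 1) (hs : s.re ∈ integrableExpSet X ρ) :
    complexMGF X ρ s = s * (1 - s) *
      ∫ z : ℝ, Complex.exp (s * z) * (∫ ω, min 1 (Real.exp (X ω - z)) ∂ρ : ℝ) := by
  have hs₀ : s ≠ 0 := by rintro rfl; simp at h0
  have hs₁ : 1 - s ≠ 0 := sub_ne_zero.2 (by rintro rfl; simp at h1)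
  have hfubini : ∫ z : ℝ, Complex.exp (s * z) * (∫ ω, min 1 (Real.exp (X ω - z)) ∂ρ : ℝ) =
      complexMGF X ρ s * (s * (1 - s))⁻¹ := by
    simp only [← integral_complex_ofReal, ← integral_const_mul]
    rw [← integral_integral_swap (integrable_prod_cexp_mul_min_one_exp_sub hX h0 h1 hs)]
    simp only [integral_cexp_mul_min_one_exp_sub h0 h1, integral_mul_const, complexMGF]
  rw [hfubini]
  field_simp

lemma integrable_min_exp_sub [IsFiniteMeasure ρ] (hX : Measurable X) (x y : ℝ) :
    Integrable (fun ω ↦ min (Real.exp (-x)) (Real.exp (X ω - y))) ρ := by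
  refine Integrable.of_bound (by fun_prop) (Real.exp (-x)) (ae_of_all _ fun ω ↦ ?_)
  rw [Real.norm_of_nonneg (by positivity)]
  exact min_le_left _ _

lemma tendsto_integral_min_one_exp_sub_atTop [IsFiniteMeasure ρ] (hX : Measurable X) :
    Tendsto (fun z ↦ ∫ ω, min 1 (Real.exp (X ω - z)) ∂ρ) atTop (𝓝 0) := by
  have hlim (ω : Ω) : Tendsto (fun z ↦ min 1 (Real.exp (X ω - z))) atTop (𝓝 0) := by
    have hexp : Tendsto (fun z ↦ Real.exp (X ω - z)) atTop (𝓝 0) :=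
      Real.tendsto_exp_atBot.comp (tendsto_atBot_add_const_left atTop (X ω) tendsto_neg_atTop_atBot)
    simpa using (tendsto_const_nhds (x := (1 : ℝ))).min hexp
  rw [← integral_zero Ω ℝ (μ := ρ)]
  refine tendsto_integral_filter_of_dominated_convergence (fun _ ↦ 1)
    (Eventually.of_forall fun z ↦ by fun_prop) (Eventually.of_forall fun z ↦ ae_of_all _ fun ω ↦ ?_)
    (integrable_const 1) (ae_of_all _ hlim)
  rw [Real.norm_of_nonneg (by positivity)]
  exact min_le_left _ _

end Transform

section Gaussian

variable (μ : ℝ) (v : ℝ≥0)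

lemma gaussianReal_tilted_mul (a : ℝ) :
    (gaussianReal μ v).tilted (a * ·) = gaussianReal (μ + v * a) v := by
  have : IsProbabilityMeasure ((gaussianReal μ v).tilted (a * ·)) :=
    isProbabilityMeasure_tilted (integrable_exp_mul_gaussianReal a)
  refine Measure.ext_of_complexMGF_id_eq (funext fun z ↦ ?_)
  have hmgf : ∫ t, Real.exp (a * t) ∂gaussianReal μ v = Real.exp (μ * a + v * a ^ 2 / 2) :=
    congrFun mgf_id_gaussianReal a
  calc complexMGF id ((gaussianReal μ v).tilted (a * ·)) z
      = (Real.exp (μ * a + v * a ^ 2 / 2) : ℂ)⁻¹ * complexMGF id (gaussianReal μ v) (a + z) := by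
        simp only [complexMGF, integral_tilted, hmgf, ← integral_const_mul]
        congr with t
        simp only [Complex.real_smul, Complex.ofReal_div, Complex.ofReal_exp, id, add_mul,
          Complex.exp_add]
        push_cast
        ring
    _ = complexMGF id (gaussianReal (μ + v * a) v) z := by
        simp only [complexMGF_id_gaussianReal, Complex.ofReal_exp, ← Complex.exp_neg,
          ← Complex.exp_add]
        congr 1
        push_cast
        ring

lemma setIntegral_exp_mul_gaussianReal (a : ℝ) (A : Set ℝ) :
    ∫ t in A, Real.exp (a * t) ∂gaussianReal μ v =
      Real.exp (μ * a + v * a ^ 2 / 2) * (gaussianReal (μ + v * a) v).real A := by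
  have htilt := setIntegral_tilted_mul_eq_mgf (μ := gaussianReal μ v) (X := id) (t := a)
    (fun _ ↦ (1 : ℝ)) A
  simp only [id, gaussianReal_tilted_mul, smul_eq_mul, mul_one, setIntegral_const,
    integral_div] at htilt
  rw [htilt, mgf_id_gaussianReal, mul_div_cancel₀ _ (Real.exp_ne_zero _)]

lemma stdCdf_eq_gaussianReal_real_Iic (x : ℝ) : stdCdf x = (gaussianReal 0 1).real (Iic x) := by
  have hpdf : stdPdf = gaussianPDFReal 0 1 := by ext t; simp [stdPdf, gaussianPDFReal]
  rw [stdCdf, hpdf, measureReal_def, gaussianReal_apply_eq_integral 0 one_ne_zero,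
    ENNReal.toReal_ofReal (integral_nonneg (gaussianPDFReal_nonneg 0 1))]

lemma gaussianReal_one_real_Iic (m c : ℝ) : (gaussianReal m 1).real (Iic c) = stdCdf (c - m) := by
  rw [← zero_add m, ← gaussianReal_map_add_const m, map_measureReal_apply (by fun_prop)
    measurableSet_Iic, stdCdf_eq_gaussianReal_real_Iic, zero_add, preimage_add_const_Iic]

lemma gaussianReal_real_Ioi (c : ℝ) : (gaussianReal 0 1).real (Ioi c) = 1 - stdCdf c := by
  rw [stdCdf_eq_gaussianReal_real_Iic, ← compl_Iic, probReal_compl_eq_one_sub measurableSet_Iic]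

lemma stdCdf_neg (c : ℝ) : stdCdf (-c) = 1 - stdCdf c := by
  have := nullSingletonClass_gaussianReal (μ := 0) (v := 1) one_ne_zero
  have hneg : (gaussianReal 0 1).map (fun t ↦ -t) = gaussianReal 0 1 := by
    rw [gaussianReal_map_neg, neg_zero]
  rw [stdCdf_eq_gaussianReal_real_Iic, ← hneg, map_measureReal_apply measurable_neg
    measurableSet_Iic, ← gaussianReal_real_Ioi]
  simp [measureReal_def, measure_congr Ioi_ae_eq_Ici]

end Gaussian

section HueslerReiss

/-- The log-ratio `2 λ t - 2 λ ^ 2` of the two coordinates of the Hüsler–Reiss spectral measure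
with parameter `λ`, as a function of a standard normal variable `t`. Its value at `λ = ∞`, where
`toReal` is `0`, is meaningless. -/
def logRatio (p : ℝ≥0∞ × ℝ) : ℝ := 2 * p.1.toReal * p.2 - 2 * p.1.toReal ^ 2

/-- The joint law of the parameter `λ` and the standard normal variable driving `logRatio`, with
`λ` restricted to `[0, ∞)`; an atom of `ν` at `∞` is lost, so the total mass may decrease. -/
noncomputable def mixtureLaw (ν : Measure ℝ≥0∞) : Measure (ℝ≥0∞ × ℝ) :=
  (ν.restrict {⊤}ᶜ).prod (gaussianReal 0 1)

instance (ν : Measure ℝ≥0∞) [IsFiniteMeasure ν] : IsFiniteMeasure (mixtureLaw ν) :=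
  inferInstanceAs (IsFiniteMeasure (Measure.prod _ _))

lemma measurable_logRatio : Measurable logRatio := by
  unfold logRatio
  fun_prop

lemma setIntegral_Iic_exp_gaussianReal (L c : ℝ) :
    ∫ t in Iic c, Real.exp (2 * L * t - 2 * L ^ 2) ∂gaussianReal 0 1 = stdCdf (c - 2 * L) := by
  simp only [Real.exp_sub, integral_div, setIntegral_exp_mul_gaussianReal]
  simp only [NNReal.coe_one, zero_add, zero_mul, one_mul, gaussianReal_one_real_Iic]
  rw [show (2 * L) ^ 2 / 2 = 2 * L ^ 2 by ring, mul_div_cancel_left₀ _ (Real.exp_ne_zero _)]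

lemma integral_min_exp_gaussianReal {L : ℝ} (hL : 0 < L) (x y : ℝ) :
    ∫ t, min (Real.exp (-x)) (Real.exp (2 * L * t - 2 * L ^ 2 - y)) ∂gaussianReal 0 1 =
      (1 - stdCdf (L + (y - x) / (2 * L))) * Real.exp (-x)
        + (1 - stdCdf (L + (x - y) / (2 * L))) * Real.exp (-y) := by
  set c := L + (y - x) / (2 * L) with hc
  have hcross : 2 * L * c - 2 * L ^ 2 - y = -x := by rw [hc]; field_simp; ring
  have hint : Integrable (fun t ↦ min (Real.exp (-x)) (Real.exp (2 * L * t - 2 * L ^ 2 - y)))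
      (gaussianReal 0 1) := integrable_min_exp_sub (by fun_prop) x y
  have hIic : ∫ t in Iic c, min (Real.exp (-x)) (Real.exp (2 * L * t - 2 * L ^ 2 - y))
      ∂gaussianReal 0 1 = (1 - stdCdf (L + (x - y) / (2 * L))) * Real.exp (-y) := by
    rw [← stdCdf_neg, show -(L + (x - y) / (2 * L)) = c - 2 * L by rw [hc]; ring,
      ← setIntegral_Iic_exp_gaussianReal, ← integral_mul_const]
    refine setIntegral_congr_fun measurableSet_Iic fun t ht ↦ ?_
    have : L * t ≤ L * c := mul_le_mul_of_nonneg_left (mem_Iic.1 ht) hL.le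
    simp only [← Real.exp_add, ← sub_eq_add_neg]
    exact min_eq_right (Real.exp_le_exp.2 (by linarith))
  have hIoi : ∫ t in Ioi c, min (Real.exp (-x)) (Real.exp (2 * L * t - 2 * L ^ 2 - y))
      ∂gaussianReal 0 1 = (1 - stdCdf c) * Real.exp (-x) := by
    rw [← gaussianReal_real_Ioi, ← smul_eq_mul (a := Measure.real _ _), ← setIntegral_const]
    refine setIntegral_congr_fun measurableSet_Ioi fun t ht ↦ ?_
    have : L * c ≤ L * t := mul_le_mul_of_nonneg_left (mem_Ioi.1 ht).le hL.le
    exact min_eq_left (Real.exp_le_exp.2 (by linarith))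
  rw [← intervalIntegral.integral_Iic_add_Ioi hint.integrableOn hint.integrableOn, hIic, hIoi,
    add_comm]

lemma nuKer_eq_sub_integral_min {l : ℝ≥0∞} (hl : l ≠ ⊤) (x y : ℝ) :
    nuKer x y l = Real.exp (-x) + Real.exp (-y)
      - ∫ t, min (Real.exp (-x)) (Real.exp (logRatio (l, t) - y)) ∂gaussianReal 0 1 := by
  rcases eq_or_ne l 0 with rfl | h0
  · have hmax : Real.exp (-min x y) = max (Real.exp (-x)) (Real.exp (-y)) := by
      rw [← max_neg_neg, Real.exp_monotone.map_max]
    have hlog (t : ℝ) : logRatio (0, t) = 0 := by simp [logRatio]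
    simp only [nuKer, if_true, hlog, zero_sub, integral_const, probReal_univ, one_smul, hmax]
    rw [← min_add_max (Real.exp (-x)), add_sub_cancel_left]
  · simp only [logRatio, integral_min_exp_gaussianReal (ENNReal.toReal_pos h0 hl), nuKer, h0, hl,
      if_false]
    ring

lemma nuKer_eq_sub_indicator (x y : ℝ) (l : ℝ≥0∞) :
    nuKer x y l = Real.exp (-x) + Real.exp (-y) - indicator {⊤}ᶜ
      (fun l ↦ ∫ t, min (Real.exp (-x)) (Real.exp (logRatio (l, t) - y)) ∂gaussianReal 0 1) l := by
  by_cases hl : l = ⊤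
  · simp [nuKer, hl]
  · rw [indicator_of_mem hl, nuKer_eq_sub_integral_min hl]

variable (ν : Measure ℝ≥0∞) [IsFiniteMeasure ν]

lemma integral_nuKer (x y : ℝ) :
    ∫ l, nuKer x y l ∂ν = (Real.exp (-x) + Real.exp (-y)) * ν.real univ
      - ∫ p, min (Real.exp (-x)) (Real.exp (logRatio p - y)) ∂mixtureLaw ν := by
  have hint := integrable_min_exp_sub (ρ := mixtureLaw ν) measurable_logRatio x y
  simp only [nuKer_eq_sub_indicator]
  rw [integral_sub (integrable_const _)
      ((integrable_indicator_iff (by simp)).2 hint.integral_prod_left), integral_const,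
    integral_indicator (by simp), mixtureLaw, integral_prod _ hint, smul_eq_mul, mul_comm]

lemma tendsto_integral_nuKer_zero_atTop :
    Tendsto (fun y ↦ ∫ l, nuKer 0 y l ∂ν) atTop (𝓝 (ν.real univ)) := by
  simp only [integral_nuKer, neg_zero, Real.exp_zero]
  have hexp : Tendsto (fun y ↦ Real.exp (-y)) atTop (𝓝 0) :=
    Real.tendsto_exp_atBot.comp tendsto_neg_atTop_atBot
  simpa using ((hexp.const_add 1).mul_const (ν.real univ)).sub
    (tendsto_integral_min_one_exp_sub_atTop (ρ := mixtureLaw ν) measurable_logRatio)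

lemma complexMGF_logRatio_gaussianReal (s : ℂ) (l : ℝ≥0∞) :
    complexMGF (fun t ↦ logRatio (l, t)) (gaussianReal 0 1) s =
      Complex.exp (-(2 * (s * (1 - s)) * l.toReal ^ 2)) := by
  have hsplit (t : ℝ) : Complex.exp (s * logRatio (l, t)) =
      Complex.exp (-(2 * s * l.toReal ^ 2)) * Complex.exp (2 * l.toReal * s * (id t : ℝ)) := by
    rw [← Complex.exp_add, logRatio]
    congr 1
    push_cast
    simp only [id]
    ring
  simp only [complexMGF, hsplit, integral_const_mul]
  rw [← complexMGF, complexMGF_id_gaussianReal, ← Complex.exp_add]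
  congr 1
  push_cast
  ring

lemma integrable_exp_mul_logRatio_gaussianReal (a : ℝ) (l : ℝ≥0∞) :
    Integrable (fun t ↦ Real.exp (a * logRatio (l, t))) (gaussianReal 0 1) := by
  have hsplit (t : ℝ) : Real.exp (a * logRatio (l, t)) =
      Real.exp (-(2 * a * l.toReal ^ 2)) * Real.exp (2 * l.toReal * a * t) := by
    rw [← Real.exp_add, logRatio]
    ring_nf
  simpa only [hsplit] using (integrable_exp_mul_gaussianReal _).const_mul _

lemma mgf_logRatio_gaussianReal (a : ℝ) (l : ℝ≥0∞) :
    mgf (fun t ↦ logRatio (l, t)) (gaussianReal 0 1) a =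
      Real.exp (-(2 * (a * (1 - a)) * l.toReal ^ 2)) := by
  have h := complexMGF_logRatio_gaussianReal a l
  rw [complexMGF_ofReal] at h
  exact_mod_cast h

lemma mem_integrableExpSet_logRatio {a : ℝ} (h0 : 0 ≤ a) (h1 : a ≤ 1) :
    a ∈ integrableExpSet logRatio (mixtureLaw ν) := by
  have hmeas := measurable_logRatio
  have hnorm (l : ℝ≥0∞) : ∫ t, ‖Real.exp (a * logRatio (l, t))‖ ∂gaussianReal 0 1 =
      Real.exp (-(2 * (a * (1 - a)) * l.toReal ^ 2)) := by
    simp only [Real.norm_of_nonneg (Real.exp_nonneg _)]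
    exact mgf_logRatio_gaussianReal a l
  refine (integrable_prod_iff (by fun_prop)).2
    ⟨ae_of_all _ (integrable_exp_mul_logRatio_gaussianReal a), ?_⟩
  simp only [hnorm]
  refine Integrable.of_bound (by fun_prop) 1 (ae_of_all _ fun l ↦ ?_)
  have : 0 ≤ 1 - a := sub_nonneg.2 h1
  rw [Real.norm_of_nonneg (by positivity), Real.exp_le_one_iff, neg_nonpos]
  positivity

lemma complexMGF_logRatio_mixtureLaw {s : ℂ} (h0 : 0 ≤ s.re) (h1 : s.re ≤ 1) :
    complexMGF logRatio (mixtureLaw ν) s =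
      ∫ l in {⊤}ᶜ, Complex.exp (-(2 * (s * (1 - s)) * l.toReal ^ 2)) ∂ν := by
  have hint : Integrable (fun p ↦ Complex.exp (s * logRatio p)) (mixtureLaw ν) :=
    integrable_cexp_mul_of_re_mem_integrableExpSet measurable_logRatio.aemeasurable
      (mem_integrableExpSet_logRatio ν h0 h1)
  simp only [← complexMGF_logRatio_gaussianReal]
  exact integral_prod _ hint

end HueslerReiss

section Determination

lemma exists_re_eq_half_mul_one_sub_eq {c : ℝ} (hc : 1 / 4 ≤ c) :
    ∃ s : ℂ, s.re = 1 / 2 ∧ s * (1 - s) = c := by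
  refine ⟨⟨1 / 2, √(c - 1 / 4)⟩, rfl, Complex.ext ?_ ?_⟩
  · have := Real.mul_self_sqrt (sub_nonneg.2 hc)
    simp only [Complex.mul_re, Complex.sub_re, Complex.sub_im, Complex.one_re, Complex.one_im,
      Complex.ofReal_re]
    linarith
  · simp
    ring

/-- The function `λ ↦ e^(-λ ^ 2)` on `[0, ∞]`, with value `0` at `∞`; its moments determine a
finite measure on `[0, ∞]`. -/
noncomputable def expNegSq : ℝ≥0∞ → ℝ := indicator {⊤}ᶜ fun l ↦ Real.exp (-l.toReal ^ 2)

lemma measurable_expNegSq : Measurable expNegSq :=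
  Measurable.indicator (by fun_prop) (by simp)

lemma norm_expNegSq_le_one (l : ℝ≥0∞) : ‖expNegSq l‖ ≤ 1 := by
  refine (norm_indicator_le_norm_self _ l).trans ?_
  rw [Real.norm_of_nonneg (Real.exp_nonneg _), Real.exp_le_one_iff, neg_nonpos]
  positivity

lemma expNegSq_injective : Function.Injective expNegSq := by
  intro a b hab
  by_cases ha : a = ⊤ <;> by_cases hb : b = ⊤ <;> simp only [expNegSq, indicator, mem_compl_iff,
    mem_singleton_iff, ha, hb, not_true, not_false_eq_true, if_true, if_false] at hab ⊢
  · exact absurd hab.symm (Real.exp_ne_zero _)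
  · exact absurd hab (Real.exp_ne_zero _)
  · rw [Real.exp_eq_exp, neg_inj, sq_eq_sq₀ ENNReal.toReal_nonneg ENNReal.toReal_nonneg] at hab
    exact (ENNReal.toReal_eq_toReal_iff' ha hb).1 hab

lemma integral_expNegSq_pow (ν : Measure ℝ≥0∞) {k : ℕ} (hk : k ≠ 0) :
    ∫ l, expNegSq l ^ k ∂ν = ∫ l in {⊤}ᶜ, Real.exp (-(k * l.toReal ^ 2)) ∂ν := by
  rw [← integral_indicator (by simp)]
  congr with l
  by_cases hl : l = ⊤
  · simp [expNegSq, hl, hk]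
  · simp [expNegSq, hl, ← Real.exp_nat_mul]

variable {ν₁ ν₂ : Measure ℝ≥0∞} [IsFiniteMeasure ν₁] [IsFiniteMeasure ν₂]

lemma integral_expNegSq_pow_eq_of_integral_min_eq
    (h : ∀ z, ∫ p, min 1 (Real.exp (logRatio p - z)) ∂mixtureLaw ν₁ =
      ∫ p, min 1 (Real.exp (logRatio p - z)) ∂mixtureLaw ν₂) {k : ℕ} (hk : k ≠ 0) :
    ∫ l, expNegSq l ^ k ∂ν₁ = ∫ l, expNegSq l ^ k ∂ν₂ := by
  have hk' : (1 : ℝ) ≤ k := by exact_mod_cast Nat.one_le_iff_ne_zero.2 hk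
  obtain ⟨s, hre, hs⟩ := exists_re_eq_half_mul_one_sub_eq (c := k / 2) (by linarith)
  have h0 : 0 < s.re := by rw [hre]; norm_num
  have h1 : s.re < 1 := by rw [hre]; norm_num
  have hmgf : complexMGF logRatio (mixtureLaw ν₁) s = complexMGF logRatio (mixtureLaw ν₂) s := by
    rw [complexMGF_eq_integral_cexp_mul_integral_min_one_exp_sub measurable_logRatio h0 h1
        (mem_integrableExpSet_logRatio ν₁ h0.le h1.le),
      complexMGF_eq_integral_cexp_mul_integral_min_one_exp_sub measurable_logRatio h0 h1
        (mem_integrableExpSet_logRatio ν₂ h0.le h1.le)]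
    simp only [h]
  have hexp (l : ℝ≥0∞) : Complex.exp (-(2 * (s * (1 - s)) * l.toReal ^ 2)) =
      (Real.exp (-(k * l.toReal ^ 2)) : ℝ) := by
    rw [hs]
    push_cast
    ring_nf
  rw [complexMGF_logRatio_mixtureLaw ν₁ h0.le h1.le, complexMGF_logRatio_mixtureLaw ν₂ h0.le h1.le]
    at hmgf
  simp only [hexp, integral_complex_ofReal, Complex.ofReal_inj] at hmgf
  rwa [integral_expNegSq_pow ν₁ hk, integral_expNegSq_pow ν₂ hk]

theorem stmt4_general (ν₁ ν₂ : Measure ℝ≥0∞) [IsFiniteMeasure ν₁] [IsFiniteMeasure ν₂]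
    (h : ∀ y : ℝ, Fnu ν₁ 0 y = Fnu ν₂ 0 y) : ν₁ = ν₂ := by
  have hker (y : ℝ) : ∫ l, nuKer 0 y l ∂ν₁ = ∫ l, nuKer 0 y l ∂ν₂ :=
    neg_injective (Real.exp_injective (h y))
  have hmass : ν₁.real univ = ν₂.real univ :=
    tendsto_nhds_unique (tendsto_integral_nuKer_zero_atTop ν₁)
      (by simpa only [hker] using tendsto_integral_nuKer_zero_atTop ν₂)
  have hmin (y : ℝ) : ∫ p, min 1 (Real.exp (logRatio p - y)) ∂mixtureLaw ν₁ =
      ∫ p, min 1 (Real.exp (logRatio p - y)) ∂mixtureLaw ν₂ := by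
    simpa only [integral_nuKer, hmass, sub_right_inj, neg_zero, Real.exp_zero] using hker y
  refine ext_of_forall_integral_pow_eq measurable_expNegSq expNegSq_injective
    norm_expNegSq_le_one fun k ↦ ?_
  rcases eq_or_ne k 0 with rfl | hk
  · simpa using hmass
  · exact integral_expNegSq_pow_eq_of_integral_min_eq hmin hk

end Determination

/-- The map `ν ↦ F_ν` is injective on probability measures on `[0,∞]`. -/
theorem stmt4 (ν₁ ν₂ : Measure ℝ≥0∞)
    (hν₁ : IsProbabilityMeasure ν₁) (hν₂ : IsProbabilityMeasure ν₂)
    (h : ∀ x y : ℝ, Fnu ν₁ x y = Fnu ν₂ x y) : ν₁ = ν₂ := by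
  exact stmt4_general ν₁ ν₂ (h 0)
end

section
/- (Extremal correlation of the Type-2 Gumbel mixture.) For every b > 0 and every t ≥ 0, ∫_0^∞ 2(1 − Φ(s·t)) · 2b s^{−3} e^{−b/s²} ds = e^{−t√(2b)}. In particular, for b = 1 and t = √g this gives ∫_0^∞ 2(1 − Φ(s√g)) · 2 s^{−3} e^{−1/s²} ds = e^{−√(2g)} for all g ≥ 0. -/
open MeasureTheory Filter Real Set

open Topology ProbabilityTheory

/-! Integrating `∫ 2 (1 - Φ(st)) d(e^{-b/s²})` by parts leaves the Cauchy–Schlömilch type integrand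
`2 t φ(st) e^{-b/s²}`. With `c = √(2b)`, completing the square gives
`φ(st) e^{-b/s²} = e^{±tc} φ(st ± c/s)`, and the derivatives `t ∓ c/s²` of `st ± c/s` add up to
`2t`; hence that integrand has an explicit antiderivative in terms of the Gaussian tail. The
antiderivative of the whole integrand so obtained tends to `-e^{-tc}` at `0⁺` and to `0` at `∞`. -/

section ImproperIntegrals

theorem integral_Ioi_of_hasDerivAt_of_nonneg_of_tendsto {f f' : ℝ → ℝ} {a l m : ℝ}
    (hderiv : ∀ x ∈ Ioi a, HasDerivAt f (f' x) x) (hpos : ∀ x ∈ Ioi a, 0 ≤ f' x)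
    (ha : Tendsto f (𝓝[>] a) (𝓝 m)) (htop : Tendsto f atTop (𝓝 l)) :
    ∫ x in Ioi a, f' x = l - m := by
  have hcont : ContinuousWithinAt (Function.update f a m) (Ici a) a := by
    rwa [continuousWithinAt_update_same, Ici_sdiff_left]
  have hderiv' : ∀ x ∈ Ioi a, HasDerivAt (Function.update f a m) (f' x) x := fun x hx ↦
    (hderiv x hx).congr_of_eventuallyEq <| by
      filter_upwards [isOpen_ne.mem_nhds (ne_of_gt hx)] with y hy
      exact Function.update_of_ne hy _ _
  have htop' : Tendsto (Function.update f a m) atTop (𝓝 l) := htop.congr' <| by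
    filter_upwards [eventually_ne_atTop a] with y hy
    exact (Function.update_of_ne hy _ _).symm
  simpa using integral_Ioi_of_hasDerivAt_of_nonneg hcont hderiv' hpos htop'

theorem hasDerivAt_integral_Iic {E : Type*} [NormedAddCommGroup E] [NormedSpace ℝ E]
    [CompleteSpace E] {f : ℝ → E} {x : ℝ} (hf : Integrable f) (hx : ContinuousAt f x) :
    HasDerivAt (fun y ↦ ∫ t in Iic y, f t) (f x) x := by
  have hsplit (y : ℝ) : ∫ t in Iic y, f t = (∫ t in Iic x, f t) + ∫ t in x..y, f t := by
    rw [← intervalIntegral.integral_Iic_sub_Iic hf.integrableOn hf.integrableOn, add_sub_cancel]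
  rw [funext hsplit]
  exact (intervalIntegral.integral_hasDerivAt_right hf.intervalIntegrable
    hf.aestronglyMeasurable.stronglyMeasurableAtFilter hx).const_add _

end ImproperIntegrals

section StandardNormal

theorem stdPdf_eq_gaussianPDFReal : stdPdf = gaussianPDFReal 0 1 := by
  ext x
  simp [stdPdf, gaussianPDFReal]

theorem stdCdf_eq_cdf_gaussianReal : stdCdf = cdf (gaussianReal 0 1) := by
  ext x
  rw [cdf_eq_real, measureReal_def, gaussianReal_apply_eq_integral 0 one_ne_zero,
    ENNReal.toReal_ofReal (integral_nonneg (gaussianPDFReal_nonneg 0 1)), stdCdf,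
    stdPdf_eq_gaussianPDFReal]

theorem hasDerivAt_stdCdf (x : ℝ) : HasDerivAt stdCdf (stdPdf x) x := by
  have hcont : Continuous stdPdf := by unfold stdPdf; fun_prop
  have hint : Integrable stdPdf := stdPdf_eq_gaussianPDFReal ▸ integrable_gaussianPDFReal 0 1
  exact hasDerivAt_integral_Iic hint hcont.continuousAt

/-- The tail `1 - Φ` of the standard normal distribution. Unlike `Φ` it vanishes at `+∞`, which
removes the boundary term there. -/
noncomputable def stdTail (x : ℝ) : ℝ := 1 - stdCdf x

theorem stdTail_nonneg (x : ℝ) : 0 ≤ stdTail x := by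
  rw [stdTail, stdCdf_eq_cdf_gaussianReal]
  exact sub_nonneg.2 (cdf_le_one _ x)

theorem hasDerivAt_stdTail (x : ℝ) : HasDerivAt stdTail (-stdPdf x) x :=
  (hasDerivAt_stdCdf x).const_sub 1

theorem continuous_stdTail : Continuous stdTail :=
  continuous_iff_continuousAt.2 fun x ↦ (hasDerivAt_stdTail x).continuousAt

theorem tendsto_stdTail_atTop : Tendsto stdTail atTop (𝓝 0) := by
  have h := (tendsto_cdf_atTop (gaussianReal 0 1)).const_sub 1
  rwa [← stdCdf_eq_cdf_gaussianReal, sub_self] at h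

theorem tendsto_stdTail_atBot : Tendsto stdTail atBot (𝓝 1) := by
  have h := (tendsto_cdf_atBot (gaussianReal 0 1)).const_sub 1
  rwa [← stdCdf_eq_cdf_gaussianReal, sub_zero] at h

end StandardNormal

section Gumbel

/-- The distribution function `e^{-b/s²}` of the Type-2 Gumbel distribution with parameter `b`,
meaningful for `s > 0` only (at `s = 0` division by zero makes it `1`). -/
noncomputable def gumbelCdf (b s : ℝ) : ℝ := exp (-b / s ^ 2)

/-- The density `2 b s⁻³ e^{-b/s²}` of the Type-2 Gumbel distribution with parameter `b`, for
`s > 0`. -/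
noncomputable def gumbelPdf (b s : ℝ) : ℝ := 2 * b * s ^ (-3 : ℤ) * exp (-b / s ^ 2)

theorem gumbelPdf_nonneg {b s : ℝ} (hb : 0 ≤ b) (hs : 0 ≤ s) : 0 ≤ gumbelPdf b s := by
  unfold gumbelPdf
  positivity

theorem hasDerivAt_gumbelCdf (b : ℝ) {s : ℝ} (hs : s ≠ 0) :
    HasDerivAt (gumbelCdf b) (gumbelPdf b s) s := by
  have hexponent : HasDerivAt (fun s : ℝ ↦ -b / s ^ 2) (2 * b * s ^ (-3 : ℤ)) s := by
    have h := (hasDerivAt_zpow (-2) s (.inl hs)).const_mul (-b)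
    refine (h.congr_deriv (by norm_num; ring)).congr_of_eventuallyEq (.of_forall fun x ↦ ?_)
    simp only [div_eq_mul_inv, zpow_neg, zpow_ofNat]
  exact hexponent.exp.congr_deriv (mul_comm _ _)

theorem tendsto_gumbelCdf_nhdsGT_zero {b : ℝ} (hb : 0 < b) :
    Tendsto (gumbelCdf b) (𝓝[>] 0) (𝓝 0) := by
  have hpow : Tendsto (fun s : ℝ ↦ s⁻¹ ^ 2) (𝓝[>] 0) atTop :=
    (tendsto_pow_atTop two_ne_zero).comp tendsto_inv_nhdsGT_zero
  have hexponent : Tendsto (fun s : ℝ ↦ -b / s ^ 2) (𝓝[>] 0) atBot := by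
    simpa only [div_eq_mul_inv, inv_pow] using hpow.const_mul_atTop_of_neg (neg_lt_zero.2 hb)
  exact tendsto_exp_atBot.comp hexponent

theorem tendsto_gumbelCdf_atTop (b : ℝ) : Tendsto (gumbelCdf b) atTop (𝓝 1) := by
  have hexponent : Tendsto (fun s : ℝ ↦ -b / s ^ 2) atTop (𝓝 0) :=
    tendsto_const_nhds.div_atTop (tendsto_pow_atTop two_ne_zero)
  exact exp_zero ▸ hexponent.rexp

end Gumbel

section CauchySchlomilch

variable {b c s t : ℝ}

theorem exp_mul_stdPdf_add_div (t : ℝ) (hc : c ^ 2 = 2 * b) (hs : s ≠ 0) :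
    exp (t * c) * stdPdf (s * t + c / s) = stdPdf (s * t) * gumbelCdf b s := by
  have hsquare : t * c + -(s * t + c / s) ^ 2 / 2 = -(s * t) ^ 2 / 2 + -b / s ^ 2 := by
    field_simp
    linear_combination -hc
  rw [stdPdf, stdPdf, gumbelCdf, mul_left_comm, mul_assoc, ← exp_add, ← exp_add, hsquare]

theorem exp_mul_stdPdf_sub_div (t : ℝ) (hc : c ^ 2 = 2 * b) (hs : s ≠ 0) :
    exp (-(t * c)) * stdPdf (s * t - c / s) = stdPdf (s * t) * gumbelCdf b s := by
  simpa only [mul_neg, neg_div, ← sub_eq_add_neg] using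
    exp_mul_stdPdf_add_div t (c := -c) (by rwa [neg_sq]) hs

/-- An antiderivative in `s` of `-2 t φ(st) e^{-c²/(2s²)}`, the integrand left over by the
integration by parts. -/
noncomputable def schlomilchTail (t c s : ℝ) : ℝ :=
  exp (t * c) * stdTail (s * t + c / s) + exp (-(t * c)) * stdTail (s * t - c / s)

theorem hasDerivAt_schlomilchTail (t : ℝ) (hc : c ^ 2 = 2 * b) (hs : s ≠ 0) :
    HasDerivAt (schlomilchTail t c) (-(2 * t * (stdPdf (s * t) * gumbelCdf b s))) s := by
  have hmul : HasDerivAt (fun s ↦ s * t) t s := hasDerivAt_mul_const t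
  have hdiv : HasDerivAt (fun s ↦ c / s) (-c / s ^ 2) s := by
    simpa using (hasDerivAt_const s c).fun_div (hasDerivAt_id s) hs
  have hadd := ((hasDerivAt_stdTail _).comp s (hmul.add hdiv)).const_mul (exp (t * c))
  have hsub := ((hasDerivAt_stdTail _).comp s (hmul.sub hdiv)).const_mul (exp (-(t * c)))
  refine (hadd.add hsub).congr_deriv ?_
  linear_combination -(t + -c / s ^ 2) * exp_mul_stdPdf_add_div t hc hs
    - (t - -c / s ^ 2) * exp_mul_stdPdf_sub_div t hc hs

theorem tendsto_schlomilchTail_nhdsGT_zero (t : ℝ) (hc : 0 < c) :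
    Tendsto (schlomilchTail t c) (𝓝[>] 0) (𝓝 (exp (-(t * c)))) := by
  have hmul : Tendsto (fun s ↦ s * t) (𝓝[>] 0) (𝓝 0) := by
    simpa using ((continuous_mul_const t).tendsto 0).mono_left nhdsWithin_le_nhds
  have hdiv : Tendsto (fun s ↦ c / s) (𝓝[>] 0) atTop := by
    simpa only [div_eq_mul_inv] using tendsto_inv_nhdsGT_zero.const_mul_atTop hc
  have hsub : Tendsto (fun s ↦ s * t - c / s) (𝓝[>] 0) atBot := by
    simpa only [sub_eq_add_neg, Function.comp_apply] using
      hmul.add_atBot (tendsto_neg_atTop_atBot.comp hdiv)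
  have h := ((tendsto_stdTail_atTop.comp (hmul.add_atTop hdiv)).const_mul (exp (t * c))).add
    ((tendsto_stdTail_atBot.comp hsub).const_mul (exp (-(t * c))))
  rwa [mul_zero, mul_one, zero_add] at h

theorem tendsto_schlomilchTail_atTop (c : ℝ) (ht : 0 < t) :
    Tendsto (schlomilchTail t c) atTop (𝓝 0) := by
  have hmul : Tendsto (fun s ↦ s * t) atTop atTop := tendsto_id.atTop_mul_const ht
  have hdiv : Tendsto (fun s ↦ c / s) atTop (𝓝 0) := tendsto_const_nhds.div_atTop tendsto_id
  have hsub : Tendsto (fun s ↦ s * t - c / s) atTop atTop := by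
    simpa only [sub_eq_add_neg] using hmul.atTop_add hdiv.neg
  have h := ((tendsto_stdTail_atTop.comp (hmul.atTop_add hdiv)).const_mul (exp (t * c))).add
    ((tendsto_stdTail_atTop.comp hsub).const_mul (exp (-(t * c))))
  rwa [mul_zero, mul_zero, zero_add] at h

theorem tendsto_schlomilchTail_zero_left_atTop (c : ℝ) :
    Tendsto (schlomilchTail 0 c) atTop (𝓝 (2 * stdTail 0)) := by
  have hdiv : Tendsto (fun s ↦ c / s) atTop (𝓝 0) := tendsto_const_nhds.div_atTop tendsto_id
  have hneg : Tendsto (fun s ↦ -(c / s)) atTop (𝓝 0) := by simpa only [neg_zero] using hdiv.neg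
  have htail := continuous_stdTail.tendsto 0
  have hzero : schlomilchTail 0 c = fun s ↦ stdTail (c / s) + stdTail (-(c / s)) := by
    ext s
    simp [schlomilchTail]
  rw [hzero, two_mul]
  exact (htail.comp hdiv).add (htail.comp hneg)

end CauchySchlomilch

section Mixture

variable {b c s t : ℝ}

/-- An antiderivative in `s` of the mixture integrand `2 (1 - Φ(st)) · 2 b s⁻³ e^{-b/s²}` when
`c² = 2b`, as produced by integration by parts. -/
noncomputable def mixturePrimitive (b t c s : ℝ) : ℝ :=
  2 * stdTail (s * t) * gumbelCdf b s - schlomilchTail t c s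

theorem hasDerivAt_mixturePrimitive (t : ℝ) (hc : c ^ 2 = 2 * b) (hs : s ≠ 0) :
    HasDerivAt (mixturePrimitive b t c) (2 * stdTail (s * t) * gumbelPdf b s) s := by
  have htail := ((hasDerivAt_stdTail (s * t)).comp s (hasDerivAt_mul_const t)).const_mul 2
  refine ((htail.mul (hasDerivAt_gumbelCdf b hs)).sub
    (hasDerivAt_schlomilchTail t hc hs)).congr_deriv ?_
  simp only [Function.comp_apply]
  ring

theorem tendsto_mixturePrimitive_nhdsGT_zero (t : ℝ) (hb : 0 < b) (hc : 0 < c) :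
    Tendsto (mixturePrimitive b t c) (𝓝[>] 0) (𝓝 (-exp (-(t * c)))) := by
  have htail : Tendsto (fun s ↦ stdTail (s * t)) (𝓝[>] 0) (𝓝 (stdTail (0 * t))) :=
    ((continuous_stdTail.comp (continuous_mul_const t)).tendsto 0).mono_left nhdsWithin_le_nhds
  have h := ((htail.const_mul 2).mul (tendsto_gumbelCdf_nhdsGT_zero hb)).sub
    (tendsto_schlomilchTail_nhdsGT_zero t hc)
  rwa [mul_zero, zero_sub] at h

theorem tendsto_mixturePrimitive_atTop (b c : ℝ) (ht : 0 ≤ t) :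
    Tendsto (mixturePrimitive b t c) atTop (𝓝 0) := by
  rcases ht.eq_or_lt with rfl | ht
  · have h := ((tendsto_gumbelCdf_atTop b).const_mul (2 * stdTail 0)).sub
      (tendsto_schlomilchTail_zero_left_atTop c)
    have hzero : mixturePrimitive b 0 c =
        fun s ↦ 2 * stdTail 0 * gumbelCdf b s - schlomilchTail 0 c s := by
      ext s
      rw [mixturePrimitive, mul_zero]
    rwa [mul_one, sub_self, ← hzero] at h
  · have htail := tendsto_stdTail_atTop.comp (tendsto_id.atTop_mul_const ht)
    have h := ((htail.const_mul 2).mul (tendsto_gumbelCdf_atTop b)).sub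
      (tendsto_schlomilchTail_atTop c ht)
    rwa [mul_zero, zero_mul, sub_zero] at h

theorem integral_stdTail_mul_gumbelPdf (hb : 0 < b) (ht : 0 ≤ t) :
    ∫ s in Ioi 0, 2 * stdTail (s * t) * gumbelPdf b s = exp (-(t * √(2 * b))) := by
  have hc : √(2 * b) ^ 2 = 2 * b := sq_sqrt (by positivity)
  have hnonneg : ∀ s ∈ Ioi (0 : ℝ), 0 ≤ 2 * stdTail (s * t) * gumbelPdf b s := fun s hs ↦
    mul_nonneg (mul_nonneg zero_le_two (stdTail_nonneg _)) (gumbelPdf_nonneg hb.le (le_of_lt hs))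
  rw [integral_Ioi_of_hasDerivAt_of_nonneg_of_tendsto
    (fun s hs ↦ hasDerivAt_mixturePrimitive t hc (ne_of_gt hs)) hnonneg
    (tendsto_mixturePrimitive_nhdsGT_zero t hb (by positivity))
    (tendsto_mixturePrimitive_atTop b _ ht), zero_sub, neg_neg]

end Mixture

/-- **Extremal correlation of the Type-2 Gumbel mixture.** -/
theorem stmt19 :
    (∀ b : ℝ, 0 < b → ∀ t : ℝ, 0 ≤ t →
      ∫ s in Set.Ioi (0 : ℝ),
          2 * (1 - stdCdf (s * t)) * (2 * b * s ^ (-3 : ℤ) * Real.exp (-b / s ^ 2))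
        = Real.exp (-(t * Real.sqrt (2 * b))))
    ∧ ∀ g : ℝ, 0 ≤ g →
      ∫ s in Set.Ioi (0 : ℝ),
          2 * (1 - stdCdf (s * Real.sqrt g)) * (2 * s ^ (-3 : ℤ) * Real.exp (-1 / s ^ 2))
        = Real.exp (-Real.sqrt (2 * g)) := by
  refine ⟨fun b hb t ht ↦ integral_stdTail_mul_gumbelPdf hb ht, fun g hg ↦ ?_⟩
  have h := integral_stdTail_mul_gumbelPdf one_pos (sqrt_nonneg g)
  rw [← sqrt_mul hg, mul_one, mul_comm g 2] at h
  simpa only [stdTail, gumbelPdf, mul_one] using h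
end
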